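/- arXiv:2208.10604 — 2 statements merged into one kernel-verified Lean document; each statement's English description precedes it below -/
import Mathlib

section
/- Let G be a group and suppose some constant δ ∈ (0,1) witnesses the strong Erdős–Hajnal property for triple products in G. Then there are constants c > 0 and ε ∈ (0,1) such that every finite subset X ⊆ G distinct from {1}, with doubling constant k = |X·X|/|X|, contains a product-free subset of size at least ε·|X|/k^c. -/
open Finset Pointwise

/-- A finite subset `A` of a group is product-free if `x * y ∉ A` for all `x, y ∈ A`. -/
def ProductFree {G : Type*} [Group G] (A : Finset G) : Prop :=
  ∀ x ∈ A, ∀ y ∈ A, x * y ∉ A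

/-- `δ` witnesses the strong Erdős–Hajnal property for the triple-product relation
`x₁x₂x₃ = y₁y₂y₃` in the group `G`. -/
def TripleSEH (G : Type*) [Group G] (δ : ℝ) : Prop :=
  ∀ U₁ U₂ U₃ V₁ V₂ V₃ : Finset G,
    ∃ U₁' ⊆ U₁, ∃ U₂' ⊆ U₂, ∃ U₃' ⊆ U₃, ∃ V₁' ⊆ V₁, ∃ V₂' ⊆ V₂, ∃ V₃' ⊆ V₃,
      δ * U₁.card ≤ U₁'.card ∧ δ * U₂.card ≤ U₂'.card ∧ δ * U₃.card ≤ U₃'.card ∧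
      δ * V₁.card ≤ V₁'.card ∧ δ * V₂.card ≤ V₂'.card ∧ δ * V₃.card ≤ V₃'.card ∧
      ((∀ u₁ ∈ U₁', ∀ u₂ ∈ U₂', ∀ u₃ ∈ U₃', ∀ v₁ ∈ V₁', ∀ v₂ ∈ V₂', ∀ v₃ ∈ V₃',
          u₁ * u₂ * u₃ = v₁ * v₂ * v₃) ∨
       (∀ u₁ ∈ U₁', ∀ u₂ ∈ U₂', ∀ u₃ ∈ U₃', ∀ v₁ ∈ V₁', ∀ v₂ ∈ V₂', ∀ v₃ ∈ V₃',
          u₁ * u₂ * u₃ ≠ v₁ * v₂ * v₃))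


theorem seh2 {G : Type*} [Group G] {δ : ℝ} (hδ : 0 < δ) (h : TripleSEH G δ) (U W V : Finset G) :
    ∃ U' ⊆ U, ∃ W' ⊆ W, ∃ V' ⊆ V, δ * U.card ≤ U'.card ∧ δ * W.card ≤ W'.card ∧
      δ * V.card ≤ V'.card ∧
      ((∀ u ∈ U', ∀ w ∈ W', ∀ v ∈ V', u * w = v) ∨ (∀ u ∈ U', ∀ w ∈ W', ∀ v ∈ V', u * w ≠ v)) := by
  obtain ⟨U', hU, W', hW, T, hT, V', hV, T2, hT2, T3, hT3, h1, h2, h3, h4, h5, h6, h7⟩ :=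
    h U W {1} V {1} {1}
  have key : ∀ T : Finset G, T ⊆ {1} → δ * (({1} : Finset G).card : ℝ) ≤ T.card → (1 : G) ∈ T := by
    intro T hT h
    rcases Finset.subset_singleton_iff.1 hT with rfl | rfl
    · simp at h; linarith
    · simp
  have k1 := key T hT h3
  have k2 := key T2 hT2 h5
  have k3 := key T3 hT3 h6
  refine ⟨U', hU, W', hW, V', hV, h1, h2, h4, ?_⟩
  rcases h7 with h7 | h7
  · left
    intro u hu w hw v hv
    simpa using h7 u hu w hw 1 k1 v hv 1 k2 1 k3
  · right
    intro u hu w hw v hv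
    simpa using h7 u hu w hw 1 k1 v hv 1 k2 1 k3

theorem amplify {G : Type*} [Group G] [DecidableEq G] {δ : ℝ} (hδ : 0 < δ) (hδ1 : δ < 1)
    (h : TripleSEH G δ) (W Y : Finset G) (n : ℕ) (hW : 2 ≤ δ ^ n * W.card) :
    ∃ Y' ⊆ Y, ∃ W2 ⊆ W, ∃ W1 ⊆ W, ((Y \ Y').card : ℝ) ≤ (1 - δ) ^ n * Y.card ∧
      δ ^ n * W.card ≤ W2.card ∧ δ ^ n * W.card ≤ W1.card ∧
      ∀ u ∈ Y', ∀ w ∈ W2, ∀ v ∈ W1, u * w ≠ v := by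
  induction n with
  | zero => exact ⟨∅, by simp, W, subset_rfl, W, subset_rfl, by simp, by simp, by simp, by simp⟩
  | succ n ih =>
    have hpos : (0 : ℝ) ≤ δ ^ n * W.card := by positivity
    have e : δ ^ (n + 1) * (W.card : ℝ) = δ * (δ ^ n * W.card) := by ring
    obtain ⟨Y', hY', W2, hW2, W1, hW1, h1, h2, h3, h4⟩ := ih (by nlinarith)
    obtain ⟨Z, hZ, W2', hW2', W1', hW1', g1, g2, g3, g4⟩ := seh2 hδ h (Y \ Y') W2 W1
    have l2 : δ ^ (n + 1) * (W.card : ℝ) ≤ W2'.card := by rw [e]; nlinarith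
    have l1 : δ ^ (n + 1) * (W.card : ℝ) ≤ W1'.card := by rw [e]; nlinarith
    have g5 : ∀ u ∈ Z, ∀ w ∈ W2', ∀ v ∈ W1', u * w ≠ v := by
      rcases g4 with g4 | g4
      · intro u hu w hw v hv
        exfalso
        have : 1 < W1'.card := by
          have : (2 : ℝ) ≤ W1'.card := hW.trans l1
          exact_mod_cast this
        obtain ⟨a, ha, b, hb, hab⟩ := Finset.one_lt_card.1 this
        exact hab ((g4 u hu w hw a ha).symm.trans (g4 u hu w hw b hb))
      · exact g4
    refine ⟨Y' ∪ Z, Finset.union_subset hY' (hZ.trans Finset.sdiff_subset), W2', hW2'.trans hW2,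
      W1', hW1'.trans hW1, ?_, l2, l1, ?_⟩
    · have : Y \ (Y' ∪ Z) = (Y \ Y') \ Z := by ext; simp; tauto
      rw [this]
      have c := Finset.card_sdiff_add_card_eq_card hZ
      have c' : (((Y \ Y') \ Z).card : ℝ) + Z.card = (Y \ Y').card := by exact_mod_cast c
      have : (((Y \ Y') \ Z).card : ℝ) ≤ (1 - δ) * (Y \ Y').card := by linarith
      calc _ ≤ _ := this
        _ ≤ (1 - δ) * ((1 - δ) ^ n * Y.card) := by gcongr
        _ = _ := by ring
    · intro u hu w hw v hv
      rcases Finset.mem_union.1 hu with hu | hu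
      · exact h4 u hu w (hW2' hw) v (hW1' hv)
      · exact g5 u hu w hw v hv

theorem rep_bound {G : Type*} [Group G] [DecidableEq G] (X Y' Y W1 W2 : Finset G) (a : ℕ)
    (hY' : Y' ⊆ X) (hY : Y ⊆ X)
    (ha : ∀ A ⊆ X, ProductFree A → A.card ≤ a)
    (h : ∀ u ∈ Y', ∀ w ∈ W2, ∀ v ∈ W1, u * w ≠ v) (s : G) :
    ((W2 ×ˢ Y).filter (fun p => p.1⁻¹ * p.2 = s)).card *
      ((W1 ×ˢ Y').filter (fun p => p.1⁻¹ * p.2 = s)).card ≤ a * (X * X⁻¹).card := by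
  rw [← Finset.card_product]
  refine Finset.card_le_mul_card_image_of_maps_to (f := fun q : (G × G) × (G × G) => q.1.2 * q.2.2⁻¹)
    ?_ a ?_
  · intro q hq
    simp only [Finset.mem_product, Finset.mem_filter] at hq
    exact Finset.mul_mem_mul (hY hq.1.1.2) (Finset.inv_mem_inv (hY' hq.2.1.2))
  · intro g hg
    set F := (((W2 ×ˢ Y).filter (fun p => p.1⁻¹ * p.2 = s)) ×ˢ
      ((W1 ×ˢ Y').filter (fun p => p.1⁻¹ * p.2 = s))).filter
        (fun q : (G × G) × (G × G) => q.1.2 * q.2.2⁻¹ = g) with hF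
    have hFm : ∀ q ∈ F, q.1.1 ∈ W2 ∧ q.1.2 ∈ Y ∧ q.2.1 ∈ W1 ∧ q.2.2 ∈ Y' ∧
        q.1.1 = q.1.2 * s⁻¹ ∧ q.2.2 = g⁻¹ * q.1.2 ∧ q.2.1 = g⁻¹ * q.1.2 * s⁻¹ := by
      intro q hq
      simp only [hF, Finset.mem_product, Finset.mem_filter] at hq
      obtain ⟨⟨⟨⟨h1, h2⟩, h3⟩, ⟨h4, h5⟩, h6⟩, h7⟩ := hq
      refine ⟨h1, h2, h4, h5, ?_, ?_, ?_⟩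
      · rw [← h3]; group
      · rw [← h7]; group
      · rw [← h7, ← h6]; group
    have hinj : (F.image (fun q => q.1.2)).card = F.card := by
      apply Finset.card_image_of_injOn
      intro q hq q' hq' e
      obtain ⟨-, -, -, -, a1, a2, a3⟩ := hFm q hq
      obtain ⟨-, -, -, -, b1, b2, b3⟩ := hFm q' hq'
      simp only at e
      ext
      · rw [a1, b1, e]
      · exact e
      · rw [a3, b3, e]
      · rw [a2, b2, e]
    rw [← hinj]
    apply ha
    · intro x hx
      obtain ⟨q, hq, rfl⟩ := Finset.mem_image.1 hx
      exact hY (hFm q hq).2.1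
    · intro x hx y hy hxy
      obtain ⟨q, hq, rfl⟩ := Finset.mem_image.1 hx
      obtain ⟨q', hq', rfl⟩ := Finset.mem_image.1 hy
      obtain ⟨q'', hq'', e⟩ := Finset.mem_image.1 hxy
      obtain ⟨-, -, -, a4, a1, a2, a3⟩ := hFm q hq
      obtain ⟨b4, -, -, -, b1, b2, b3⟩ := hFm q' hq'
      obtain ⟨-, -, c4, -, c1, c2, c3⟩ := hFm q'' hq''
      apply h _ a4 _ b4 _ c4
      rw [a2, b1, c3, e]
      group

theorem markov {α : Type*} (W : Finset α) (f : α → ℕ) (β : ℝ) (hβ : 0 < β)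
    (h : ((∑ w ∈ W, f w : ℕ) : ℝ) ≤ β * (W.card / 2)) :
    (W.card : ℝ) / 2 ≤ (W.filter (fun w => (f w : ℝ) ≤ β)).card := by
  have h1 : β * ((W.filter (fun w => ¬ (f w : ℝ) ≤ β)).card : ℝ) ≤ ∑ w ∈ W, (f w : ℝ) := by
    calc _ = ∑ w ∈ W.filter (fun w => ¬ (f w : ℝ) ≤ β), β := by simp [mul_comm]
      _ ≤ ∑ w ∈ W.filter (fun w => ¬ (f w : ℝ) ≤ β), (f w : ℝ) := by
        apply Finset.sum_le_sum
        intro w hw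
        exact (not_le.1 (Finset.mem_filter.1 hw).2).le
      _ ≤ _ := by
        apply Finset.sum_le_sum_of_subset_of_nonneg (Finset.filter_subset _ _)
        intros; positivity
  have h2 := Finset.card_filter_add_card_filter_not (s := W) (fun w => (f w : ℝ) ≤ β)
  have h2' : ((W.filter (fun w => (f w : ℝ) ≤ β)).card : ℝ) +
    (W.filter (fun w => ¬ (f w : ℝ) ≤ β)).card = W.card := by exact_mod_cast h2
  push_cast at h
  have := le_of_mul_le_mul_left (h1.trans h) hβ
  linarith

theorem sum_rep {G : Type*} [Group G] [DecidableEq G] (W Y T : Finset G) :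
    ∑ w ∈ W, (Y.filter (fun y => w⁻¹ * y ∈ T)).card =
      ∑ s ∈ T, ((W ×ˢ Y).filter (fun p => p.1⁻¹ * p.2 = s)).card := by
  have : ∀ w ∈ W, (Y.filter (fun y => w⁻¹ * y ∈ T)).card =
      ∑ s ∈ T, (Y.filter (fun y => w⁻¹ * y = s)).card := by
    intro w _
    rw [Finset.sum_card_fiberwise_eq_card_filter]
  rw [Finset.sum_congr rfl this, Finset.sum_comm]
  apply Finset.sum_congr rfl
  intro s _
  simp only [Finset.card_filter, Finset.sum_product]

theorem induct {G : Type*} [Group G] [DecidableEq G] {δ : ℝ} (hδ : 0 < δ) (hδ1 : δ < 1)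
    (h : TripleSEH G δ) (m : ℕ) (hm : (1 - δ) ^ m ≤ 1 / 4) (X : Finset G) (a : ℕ)
    (ha : ∀ A ⊆ X, ProductFree A → A.card ≤ a) (β τ ω y0 M : ℝ) (hβ : 0 < β) (hτ : 0 < τ)
    (hω : 1 ≤ ω) (h1 : τ * M ≤ β * ω) (h2 : a * (X * X⁻¹).card * M ≤ τ * (β * ω)) (i : ℕ) :
    ∀ (W Y S : Finset G) (b : ℝ), W ⊆ X → Y ⊆ X → (S.card : ℝ) ≤ M →
      (2 / δ ^ m) ^ i * ω ≤ W.card → (4 / 3) ^ i * y0 ≤ Y.card →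
      (∀ w ∈ W, ((Y.filter (fun y => ¬ w⁻¹ * y ∈ S)).card : ℝ) ≤ b) →
      b + i * β ≤ y0 / 2 → 2 ^ i * (y0 / 2) ≤ S.card := by
  have hγ : 0 < δ ^ m := by positivity
  have hγ1 : δ ^ m ≤ 1 := pow_le_one₀ hδ.le hδ1.le
  induction i with
  | zero =>
    intro W Y S b hW hY hS hWc hYc hb hby
    have : (0 : ℝ) < W.card := by simp at hWc; linarith
    obtain ⟨w, hw⟩ := Finset.card_pos.1 (by exact_mod_cast this)
    have hb := hb w hw
    have c := Finset.card_filter_add_card_filter_not (s := Y) (fun y => w⁻¹ * y ∈ S)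
    have c' : ((Y.filter (fun y => w⁻¹ * y ∈ S)).card : ℝ) +
      (Y.filter (fun y => ¬ w⁻¹ * y ∈ S)).card = Y.card := by exact_mod_cast c
    have d : (Y.filter (fun y => w⁻¹ * y ∈ S)).card ≤ S.card := by
      apply Finset.card_le_card_of_injOn (fun y => w⁻¹ * y)
      · intro y hy
        exact (Finset.mem_filter.1 hy).2
      · intro y _ y' _ e
        exact mul_left_cancel e
    have d' : ((Y.filter (fun y => w⁻¹ * y ∈ S)).card : ℝ) ≤ S.card := by exact_mod_cast d
    simp only [pow_zero, one_mul, Nat.cast_zero, zero_mul, add_zero] at *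
    linarith
  | succ i ih =>
    intro W Y S b hW hY hS hWc hYc hb hby
    have hq : (1 : ℝ) ≤ (2 / δ ^ m) ^ i := by
      apply one_le_pow₀
      rw [le_div_iff₀ hγ]; linarith
    have hWc' : 2 * ((2 / δ ^ m) ^ i * ω) ≤ δ ^ m * W.card := by
      calc _ = δ ^ m * ((2 / δ ^ m) ^ (i + 1) * ω) := by
            rw [pow_succ (2 / δ ^ m)]; field_simp
        _ ≤ _ := by gcongr
    have hqω : ω ≤ (2 / δ ^ m) ^ i * ω := by nlinarith
    obtain ⟨Y', hY', W2, hW2, W1, hW1, e1, e2, e3, e4⟩ := amplify hδ hδ1 h W Y m (by linarith)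
    have hY'c : (4 / 3) ^ i * y0 ≤ Y'.card := by
      have c := Finset.card_sdiff_add_card_eq_card hY'
      have c' : ((Y \ Y').card : ℝ) + Y'.card = Y.card := by exact_mod_cast c
      have : (1 - δ) ^ m * (Y.card : ℝ) ≤ 1 / 4 * Y.card := by gcongr
      rw [pow_succ] at hYc
      linarith
    have hi : (0 : ℝ) ≤ i * β := by positivity
    have hYc' : (4 / 3) ^ i * y0 ≤ Y.card := by
      have : (Y'.card : ℝ) ≤ Y.card := by exact_mod_cast Finset.card_le_card hY'
      linarith
    set S' := S.filter (fun s => τ ≤ ((W1 ×ˢ Y').filter (fun p => p.1⁻¹ * p.2 = s)).card) with hS'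
    have hS'S : S' ⊆ S := Finset.filter_subset _ _
    have cS := Finset.card_sdiff_add_card_eq_card hS'S
    have cS' : ((S \ S').card : ℝ) + S'.card = S.card := by exact_mod_cast cS
    have p0 : (0 : ℝ) ≤ (S \ S').card := by positivity
    have p1 : (0 : ℝ) ≤ S'.card := by positivity
    -- first half
    have m1 := markov W1 (fun w => (Y'.filter (fun y => w⁻¹ * y ∈ S \ S')).card) β hβ (by
      rw [sum_rep]
      push_cast
      calc _ ≤ ∑ s ∈ S \ S', τ := by
            apply Finset.sum_le_sum
            intro s hs
            simp only [hS', Finset.mem_sdiff, Finset.mem_filter, not_and, not_le] at hs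
            exact (hs.2 hs.1).le
        _ = τ * (S \ S').card := by simp [mul_comm]
        _ ≤ τ * M := by gcongr; linarith
        _ ≤ β * ω := h1
        _ ≤ _ := by gcongr; linarith)
    have m2 := markov W2 (fun w => (Y.filter (fun y => w⁻¹ * y ∈ S')).card) β hβ (by
      rw [sum_rep]
      push_cast
      have : τ * ∑ s ∈ S', (((W2 ×ˢ Y).filter (fun p => p.1⁻¹ * p.2 = s)).card : ℝ) ≤
          τ * (β * ω) := by
        rw [Finset.mul_sum]
        calc _ ≤ ∑ s ∈ S', ((a * (X * X⁻¹).card : ℕ) : ℝ) := by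
              apply Finset.sum_le_sum
              intro s hs
              have hs2 := (Finset.mem_filter.1 hs).2
              have rb := rep_bound X Y' Y W1 W2 a (hY'.trans hY) hY ha e4 s
              refine le_trans ?_ (Nat.cast_le.2 rb)
              push_cast
              rw [mul_comm]
              gcongr
          _ = (a * (X * X⁻¹).card) * S'.card := by simp [mul_comm]
          _ ≤ (a * (X * X⁻¹).card) * M := by gcongr; linarith
          _ ≤ _ := h2
      have := le_of_mul_le_mul_left this hτ
      refine this.trans ?_
      gcongr; linarith)
    have hb' : b + β + i * β ≤ y0 / 2 := by push_cast at hby; linarith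
    have r1 := ih _ Y' S' (b + β) (((Finset.filter_subset _ _).trans hW1).trans hW)
      (hY'.trans hY) (by linarith) (le_trans (by linarith) m1) hY'c (by
        intro w hw
        rw [Finset.mem_filter] at hw
        have t1 := hb w (hW1 hw.1)
        have t2 := hw.2
        have : (Y'.filter (fun y => ¬ w⁻¹ * y ∈ S')) ⊆ (Y.filter (fun y => ¬ w⁻¹ * y ∈ S)) ∪
            (Y'.filter (fun y => w⁻¹ * y ∈ S \ S')) := by
          intro y hy
          have := @hY' y
          simp only [Finset.mem_union, Finset.mem_filter, Finset.mem_sdiff] at hy ⊢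
          tauto
        have := (Finset.card_le_card this).trans (Finset.card_union_le _ _)
        have : ((Y'.filter (fun y => ¬ w⁻¹ * y ∈ S')).card : ℝ) ≤
          (Y.filter (fun y => ¬ w⁻¹ * y ∈ S)).card + (Y'.filter (fun y => w⁻¹ * y ∈ S \ S')).card := by
          exact_mod_cast this
        linarith) hb'
    have r2 := ih _ Y (S \ S') (b + β) (((Finset.filter_subset _ _).trans hW2).trans hW)
      hY (by linarith) (le_trans (by linarith) m2) hYc' (by
        intro w hw
        rw [Finset.mem_filter] at hw
        have t1 := hb w (hW2 hw.1)
        have t2 := hw.2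
        have : (Y.filter (fun y => ¬ w⁻¹ * y ∈ S \ S')) ⊆ (Y.filter (fun y => ¬ w⁻¹ * y ∈ S)) ∪
            (Y.filter (fun y => w⁻¹ * y ∈ S')) := by
          intro y hy
          simp only [Finset.mem_union, Finset.mem_filter, Finset.mem_sdiff] at hy ⊢
          tauto
        have := (Finset.card_le_card this).trans (Finset.card_union_le _ _)
        have : ((Y.filter (fun y => ¬ w⁻¹ * y ∈ S \ S')).card : ℝ) ≤
          (Y.filter (fun y => ¬ w⁻¹ * y ∈ S)).card + (Y.filter (fun y => w⁻¹ * y ∈ S')).card := by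
          exact_mod_cast this
        linarith) hb'
    rw [pow_succ]
    linarith

theorem stmt0 {G : Type*} [Group G] [DecidableEq G] (δ : ℝ) (hδ : δ ∈ Set.Ioo (0 : ℝ) 1)
    (hSEH : TripleSEH G δ) :
    ∃ c ε : ℝ, 0 < c ∧ ε ∈ Set.Ioo (0 : ℝ) 1 ∧
      ∀ X : Finset G, X ≠ {1} →
        ∃ A ⊆ X, ProductFree A ∧
          ε * X.card / (((X * X).card : ℝ) / X.card) ^ c ≤ A.card := by
  obtain ⟨hδ0, hδ1⟩ := hδ
  obtain ⟨m, hm⟩ := exists_pow_lt_of_lt_one (show (0 : ℝ) < 1 / 4 by norm_num)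
    (show 1 - δ < 1 by linarith)
  obtain ⟨γ, hγdef⟩ : ∃ γ : ℝ, γ = δ ^ m := ⟨_, rfl⟩
  have hγ : 0 < γ := by rw [hγdef]; positivity
  have hγ1 : γ ≤ 1 := by rw [hγdef]; exact pow_le_one₀ hδ0.le hδ1.le
  obtain ⟨θ, hθdef⟩ : ∃ θ : ℝ, θ = ((3 / 8) * (γ / 2)) ^ 2 := ⟨_, rfl⟩
  have hθ : 0 < θ := by rw [hθdef]; positivity
  have hθγ : θ ≤ γ / 2 := by rw [hθdef]; nlinarith
  obtain ⟨c0, hc0⟩ := exists_pow_lt_of_lt_one hθ (show (2 / 3 : ℝ) < 1 by norm_num)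
  have h2c : (1 : ℝ) ≤ 2 ^ c0 := one_le_pow₀ (by norm_num)
  refine ⟨((2 * c0 + 6 : ℕ) : ℝ), θ / (4 * 2 ^ c0), by positivity, ⟨by positivity, ?_⟩, ?_⟩
  · rw [div_lt_one (by positivity)]
    linarith
  intro X hX1
  rcases X.eq_empty_or_nonempty with rfl | hX
  · exact ⟨∅, by simp, by simp [ProductFree], by simp⟩
  have hn : (0 : ℝ) < X.card := by exact_mod_cast hX.card_pos
  rw [Real.rpow_natCast]
  obtain ⟨n, hndef⟩ : ∃ n : ℝ, n = X.card := ⟨_, rfl⟩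
  obtain ⟨K, hKdef⟩ : ∃ K : ℝ, K = ((X * X).card : ℝ) / X.card := ⟨_, rfl⟩
  rw [← hKdef]
  rw [← hndef] at hn hKdef ⊢
  have hKn : ((X * X).card : ℝ) = K * n := by rw [hKdef]; field_simp
  have hK : 1 ≤ K := by
    rw [hKdef, le_div_iff₀ hn, one_mul, hndef]
    exact_mod_cast Finset.card_le_card_mul_right hX
  have hR1 : ((X⁻¹ * X).card : ℝ) ≤ K ^ 2 * n := by
    have := Finset.ruzsa_triangle_inequality_invMul_mul_mul X X X
    have : (X.card : ℝ) * (X⁻¹ * X).card ≤ (X * X).card * (X * X).card := by exact_mod_cast this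
    rw [hKn, ← hndef] at this
    refine le_of_mul_le_mul_left (this.trans (le_of_eq ?_)) hn
    ring
  have hR2 : ((X * X⁻¹).card : ℝ) ≤ K ^ 2 * n := by
    have := Finset.ruzsa_triangle_inequality_mulInv_mul_mul X X X
    have : ((X * X⁻¹).card : ℝ) * X.card ≤ (X * X).card * (X * X).card := by exact_mod_cast this
    rw [hKn, ← hndef] at this
    refine le_of_mul_le_mul_right (this.trans (le_of_eq ?_)) hn
    ring
  classical
  -- a largest product-free subset
  obtain ⟨A, hA, hmax⟩ := Finset.exists_max_image (X.powerset.filter ProductFree) Finset.card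
    ⟨∅, by simp [ProductFree]⟩
  simp only [Finset.mem_filter, Finset.mem_powerset] at hA hmax
  refine ⟨A, hA.1, hA.2, ?_⟩
  by_contra hlt
  rw [not_le] at hlt
  have hA1 : 1 ≤ A.card := by
    obtain ⟨g, hg, hg1⟩ : ∃ g ∈ X, g ≠ 1 := by
      by_contra hcon
      push Not at hcon
      exact hX1 (Finset.eq_singleton_iff_nonempty_unique_mem.2 ⟨hX, hcon⟩)
    simpa using hmax {g} ⟨by simpa using hg, by simp [ProductFree, hg1]⟩
  have hA1' : (1 : ℝ) ≤ A.card := by exact_mod_cast hA1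
  obtain ⟨j, hj1, hj2⟩ := exists_nat_pow_near (show 1 ≤ 2 * K ^ 2 by nlinarith)
    (show (1 : ℝ) < 3 / 2 by norm_num)
  have hK0 : 0 < K := by linarith
  have hθj : θ / (2 ^ c0 * K ^ (2 * c0)) ≤ θ ^ (j + 1) := by
    have e1 : ((2 / 3 : ℝ) ^ c0) ^ j ≤ θ ^ j := by gcongr
    have e2 : 1 / (2 * K ^ 2) ^ c0 ≤ ((2 / 3 : ℝ) ^ c0) ^ j := by
      rw [← pow_mul, mul_comm c0 j, pow_mul, ← one_div_pow]
      gcongr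
      have : (2 / 3 : ℝ) ^ j = 1 / (3 / 2) ^ j := by
        rw [← one_div_pow]; norm_num
      rw [this]
      gcongr
    have e3 : (2 * K ^ 2) ^ c0 = 2 ^ c0 * K ^ (2 * c0) := by rw [mul_pow, pow_mul]
    rw [e3] at e2
    calc _ = θ * (1 / (2 ^ c0 * K ^ (2 * c0))) := by ring
      _ ≤ θ * θ ^ j := by gcongr; exact e2.trans e1
      _ = _ := by ring
  have hA2 : (A.card : ℝ) ≤ θ ^ (j + 1) * n / (4 * K ^ 6) := by
    calc (A.card : ℝ) ≤ _ := hlt.le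
      _ = θ / (2 ^ c0 * K ^ (2 * c0)) * (n / (4 * K ^ 6)) := by
        rw [pow_add]; field_simp
      _ ≤ θ ^ (j + 1) * (n / (4 * K ^ 6)) := by gcongr
      _ = _ := by ring
  set I := j + 1 with hI
  have hω : 1 ≤ (γ / 2) ^ I * n := by
    have hK6 : (1 : ℝ) ≤ K ^ 6 := one_le_pow₀ hK
    calc (1 : ℝ) ≤ _ := hA1'.trans hA2
      _ ≤ θ ^ I * n / 1 := by
        gcongr
        linarith
      _ = θ ^ I * n := by ring
      _ ≤ _ := by gcongr
  obtain ⟨β, hβ⟩ : ∃ β : ℝ, β = (3 / 8) ^ I * n / 2 := ⟨_, rfl⟩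
  obtain ⟨ω, hωdef⟩ : ∃ ω : ℝ, ω = (γ / 2) ^ I * n := ⟨_, rfl⟩
  have hβ0 : 0 < β := by rw [hβ]; positivity
  have hω0 : 0 < ω := by rw [hωdef]; positivity
  have hq0 : 0 ≤ θ ^ I * n / (4 * K ^ 6) := by positivity
  have hq1 : 0 ≤ K ^ 2 * n := by positivity
  have main := induct hδ0 hδ1 hSEH m hm.le X A.card (fun B hB hB' => hmax B ⟨hB, hB'⟩)
    β (β * ω / (K ^ 2 * n)) ω ((3 / 4) ^ I * n) (K ^ 2 * n) hβ0 (by positivity) (by rw [hωdef]; exact hω)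
    (by apply le_of_eq; field_simp) (by
      calc (A.card : ℝ) * (X * X⁻¹).card * (K ^ 2 * n)
          ≤ (θ ^ I * n / (4 * K ^ 6)) * (K ^ 2 * n) * (K ^ 2 * n) :=
            mul_le_mul_of_nonneg_right (mul_le_mul hA2 hR2 (Nat.cast_nonneg _) hq0) hq1
        _ = θ ^ I * n ^ 3 / (4 * K ^ 2) := by
          generalize θ ^ I = t
          field_simp
        _ = β * ω / (K ^ 2 * n) * (β * ω) := by
          have : θ ^ I = ((3 / 8) ^ I) ^ 2 * ((γ / 2) ^ I) ^ 2 := by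
            rw [hθdef, ← pow_mul, mul_comm 2 I, pow_mul, mul_pow, mul_pow]
          rw [this, hβ, hωdef]
          generalize (3 / 8 : ℝ) ^ I = p
          generalize (γ / 2) ^ I = q
          field_simp
          try ring
        ) I X X (X⁻¹ * X) 0 subset_rfl subset_rfl hR1 (by
      rw [← hγdef, hωdef, ← hndef, ← mul_assoc, ← mul_pow]
      apply le_of_eq
      have : 2 / γ * (γ / 2) = 1 := by field_simp
      rw [this]; simp) (by
      rw [← hndef, ← mul_assoc, ← mul_pow]
      norm_num) (by
      intro w hw
      have : (X.filter (fun y => ¬ w⁻¹ * y ∈ X⁻¹ * X)) = ∅ := by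
        apply Finset.filter_eq_empty_iff.2
        intro y hy
        rw [not_not]
        exact Finset.mul_mem_mul (Finset.inv_mem_inv hw) hy
      rw [this]; simp) (by
      have h2I : (I : ℝ) ≤ 2 ^ I := by exact_mod_cast Nat.lt_two_pow_self.le
      calc 0 + (I : ℝ) * β ≤ 2 ^ I * β := by rw [zero_add]; gcongr
        _ = (2 ^ I * (3 / 8) ^ I) * n / 2 := by rw [hβ]; ring
        _ ≤ _ := by rw [← mul_pow]; norm_num)
  have hfin := main.trans hR1
  have e : (2 : ℝ) ^ I * ((3 / 4) ^ I * n / 2) = (3 / 2) ^ I * n / 2 := by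
    rw [show (3 / 2 : ℝ) = 2 * (3 / 4) by norm_num, mul_pow]; ring
  rw [e] at hfin
  nlinarith
end

section
/- Let G be a group and suppose some constant δ ∈ (0,1) witnesses the strong Erdős–Hajnal property for triple products in G. Then there are constants c > 0 and ε ∈ (0,1) such that for every real k ≥ 1, every finite k-approximate subgroup X ⊆ G distinct from {1} contains a product-free subset of size at least ε·|X|/k^c. -/
open Finset Pointwise

/-- Number of triples `(w₁,w₂,w₃)` in the box with `w₂ w₃ w₁ ∈ X`. -/
def cntTriples {G : Type*} [Group G] [DecidableEq G] (X W₁ W₂ W₃ : Finset G) : ℕ :=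
  ((W₁ ×ˢ W₂ ×ˢ W₃).filter (fun p => p.2.1 * p.2.2 * p.1 ∈ X)).card

/-- An empty box yields a product-free set. -/
lemma exists_productFree_of_empty {G : Type*} [Group G] [DecidableEq G] (X W₁ W₂ W₃ : Finset G)
    (N : ℝ) (hN : 0 < N)
    (h1 : ∀ a ∈ W₁, ∀ b ∈ W₂, ∀ c ∈ W₃, a * b * c ≠ 1)
    (h23 : ((W₂ * W₃).card : ℝ) ≤ N) (h31 : ((W₃ * W₁).card : ℝ) ≤ N) :
    ∃ A ⊆ X, ProductFree A ∧ (cntTriples X W₁ W₂ W₃ : ℝ) ≤ N ^ 2 * A.card := by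
  classical
  set F : G × G → Finset G := fun q => X.filter (fun a =>
    q.1⁻¹ * a ∈ W₁ ∧ a * q.2⁻¹ ∈ W₂ ∧ q.2 * a⁻¹ * q.1 ∈ W₃) with hF
  have hpf : ∀ q, ProductFree (F q) := by
    intro q x hx y hy hxy
    simp only [hF, Finset.mem_filter] at hx hy hxy
    refine h1 _ hx.2.1 _ hy.2.2.1 _ hxy.2.2.2 ?_
    group
  by_contra hcon
  push Not at hcon
  have hlt : ∀ q, N ^ 2 * ((F q).card : ℝ) < cntTriples X W₁ W₂ W₃ := fun q =>
    hcon (F q) (Finset.filter_subset _ _) (hpf q)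
  have hle : cntTriples X W₁ W₂ W₃ ≤ ∑ q ∈ (W₂ * W₃) ×ˢ (W₃ * W₁), (F q).card := by
    rw [← Finset.card_sigma]
    unfold cntTriples
    refine Finset.card_le_card_of_injOn
      (fun p => ⟨(p.2.1 * p.2.2, p.2.2 * p.1), p.2.1 * p.2.2 * p.1⟩) ?_ ?_
    · rintro ⟨a, b, c⟩ hp
      simp only [Finset.coe_filter, Finset.mem_product, Set.mem_ofPred_eq] at hp
      obtain ⟨⟨ha, hb, hc⟩, hX⟩ := hp
      simp only [Finset.coe_sigma, Set.mem_sigma_iff, Finset.mem_coe, Finset.mem_product, hF,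
        Finset.mem_filter]
      refine ⟨⟨Finset.mul_mem_mul hb hc, Finset.mul_mem_mul hc ha⟩, hX, ?_, ?_, ?_⟩
      · convert ha using 1; group
      · convert hb using 1; group
      · convert hc using 1; group
    · rintro ⟨a, b, c⟩ _ ⟨a', b', c'⟩ _ h
      simp only [Sigma.mk.injEq, Prod.mk.injEq, heq_eq_eq] at h
      obtain ⟨⟨e1, e2⟩, e3⟩ := h
      have ea : a = a' := by
        rw [e1] at e3; exact mul_left_cancel e3
      subst ea
      have ec : c = c' := mul_right_cancel e2
      subst ec
      have eb : b = b' := mul_right_cancel e1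
      subst eb
      rfl
  set Q := (W₂ * W₃) ×ˢ (W₃ * W₁) with hQ
  set C : ℝ := (cntTriples X W₁ W₂ W₃ : ℝ) with hC
  have hCpos : 0 < C := lt_of_le_of_lt (by positivity) (hlt (1, 1))
  have hle' : C ≤ ∑ q ∈ Q, ((F q).card : ℝ) := by
    rw [hC]; exact_mod_cast hle
  have hQc : (Q.card : ℝ) ≤ N ^ 2 := by
    rw [hQ, Finset.card_product]
    push_cast
    rw [sq]
    exact mul_le_mul h23 h31 (by positivity) hN.le
  have hQne : Q.Nonempty := by
    rw [Finset.nonempty_iff_ne_empty]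
    intro h0
    rw [h0] at hle'
    simp at hle'
    linarith
  have h2 : ∑ q ∈ Q, (N ^ 2 * ((F q).card : ℝ)) < ∑ q ∈ Q, C :=
    Finset.sum_lt_sum_of_nonempty hQne (fun q _ => hlt q)
  rw [← Finset.mul_sum, Finset.sum_const, nsmul_eq_mul] at h2
  have h3 : N ^ 2 * C ≤ N ^ 2 * ∑ q ∈ Q, ((F q).card : ℝ) :=
    mul_le_mul_of_nonneg_left hle' (by positivity)
  have h4 : (Q.card : ℝ) * C ≤ N ^ 2 * C := mul_le_mul_of_nonneg_right hQc hCpos.le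
  linarith

/-- Shrinking a subset. -/
lemma shrink_subset {G : Type*} (δ : ℝ) (hδ0 : 0 < δ) (hδ4 : δ ≤ 1 / 4) (W U : Finset G)
    (hW : 1 < δ * W.card) (hU : δ * W.card ≤ U.card) :
    ∃ U' ⊆ U, δ * W.card ≤ U'.card ∧ (U'.card : ℝ) ≤ W.card / 2 := by
  have h : ⌈δ * W.card⌉₊ ≤ U.card := Nat.ceil_le.mpr hU
  obtain ⟨U', hU', hc⟩ := Finset.exists_subset_card_eq h
  refine ⟨U', hU', ?_, ?_⟩
  · rw [hc]; exact Nat.le_ceil _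
  · rw [hc]
    have := Nat.ceil_lt_add_one (a := δ * W.card) (by positivity)
    have h0 : (0 : ℝ) ≤ W.card := by positivity
    nlinarith

lemma seh_step {G : Type*} [Group G] (δ : ℝ) (hδ0 : 0 < δ) (hδ4 : δ ≤ 1 / 4)
    (hSEH : TripleSEH G δ) (W₁ W₂ W₃ : Finset G)
    (hW₁ : 1 < δ * W₁.card) (hW₂ : 1 < δ * W₂.card) (hW₃ : 1 < δ * W₃.card) :
    ∃ U₁ ⊆ W₁, ∃ U₂ ⊆ W₂, ∃ U₃ ⊆ W₃,
      (∀ a ∈ U₁, ∀ b ∈ U₂, ∀ c ∈ U₃, a * b * c ≠ 1) ∧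
      (δ * W₁.card ≤ U₁.card ∧ (U₁.card : ℝ) ≤ W₁.card / 2) ∧
      (δ * W₂.card ≤ U₂.card ∧ (U₂.card : ℝ) ≤ W₂.card / 2) ∧
      (δ * W₃.card ≤ U₃.card ∧ (U₃.card : ℝ) ≤ W₃.card / 2) := by
  obtain ⟨U₁, hU₁, U₂, hU₂, U₃, hU₃, V₁, hV₁, V₂, hV₂, V₃, hV₃, c1, c2, c3, d1, d2, d3, h⟩ :=
    hSEH W₁ W₂ W₃ {1} {1} {1}
  have hone : ∀ V : Finset G, V ⊆ {1} → δ * (({1} : Finset G).card : ℝ) ≤ V.card →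
      (1 : G) ∈ V := by
    intro V hV hc
    have : 0 < V.card := by
      have : (0 : ℝ) < V.card := lt_of_lt_of_le (by simpa using hδ0) hc
      exact_mod_cast this
    obtain ⟨x, hx⟩ := Finset.card_pos.mp this
    have := hV hx
    rw [Finset.mem_singleton] at this
    rwa [this] at hx
  have o1 := hone _ hV₁ d1
  have o2 := hone _ hV₂ d2
  have o3 := hone _ hV₃ d3
  obtain ⟨A₁, a1, a1', a1''⟩ := shrink_subset δ hδ0 hδ4 W₁ U₁ hW₁ c1
  obtain ⟨A₂, a2, a2', a2''⟩ := shrink_subset δ hδ0 hδ4 W₂ U₂ hW₂ c2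
  obtain ⟨A₃, a3, a3', a3''⟩ := shrink_subset δ hδ0 hδ4 W₃ U₃ hW₃ c3
  refine ⟨A₁, a1.trans hU₁, A₂, a2.trans hU₂, A₃, a3.trans hU₃, ?_, ⟨a1', a1''⟩, ⟨a2', a2''⟩,
    ⟨a3', a3''⟩⟩
  rcases h with h | h
  · exfalso
    have p1 : 1 < U₁.card := by
      have : (1 : ℝ) < U₁.card := lt_of_lt_of_le hW₁ c1
      exact_mod_cast this
    have p2 : 0 < U₂.card := by
      have : (0 : ℝ) < U₂.card := lt_of_lt_of_le (by linarith) c2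
      exact_mod_cast this
    have p3 : 0 < U₃.card := by
      have : (0 : ℝ) < U₃.card := lt_of_lt_of_le (by linarith) c3
      exact_mod_cast this
    obtain ⟨x, hx, y, hy, hxy⟩ := Finset.one_lt_card.mp p1
    obtain ⟨b, hb⟩ := Finset.card_pos.mp p2
    obtain ⟨c, hc⟩ := Finset.card_pos.mp p3
    have e1 := h x hx b hb c hc 1 o1 1 o2 1 o3
    have e2 := h y hy b hb c hc 1 o1 1 o2 1 o3
    have e3 := e1.trans e2.symm
    exact hxy (mul_right_cancel (mul_right_cancel e3))
  · intro a ha b hb c hc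
    have := h a (a1 ha) b (a2 hb) c (a3 hc) 1 o1 1 o2 1 o3
    simpa using this

lemma cnt_split {G : Type*} [Group G] [DecidableEq G] (X W₁ W₂ W₃ U₁ U₂ U₃ : Finset G) :
    cntTriples X W₁ W₂ W₃ ≤ cntTriples X U₁ U₂ U₃ + cntTriples X (W₁ \ U₁) W₂ W₃
      + cntTriples X U₁ (W₂ \ U₂) W₃ + cntTriples X U₁ U₂ (W₃ \ U₃) := by
  unfold cntTriples
  refine le_trans (Finset.card_le_card ?_) (le_trans (Finset.card_union_le _ _)
    (Nat.add_le_add_right (le_trans (Finset.card_union_le _ _)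
    (Nat.add_le_add_right (Finset.card_union_le _ _) _)) _))
  rintro ⟨a, b, c⟩ h
  simp only [Finset.mem_union, Finset.mem_filter, Finset.mem_product, Finset.mem_sdiff] at h ⊢
  tauto

lemma cnt_le {G : Type*} [Group G] [DecidableEq G] (X W₁ W₂ W₃ : Finset G) :
    (cntTriples X W₁ W₂ W₃ : ℝ) ≤ W₁.card * W₂.card * W₃.card := by
  have : cntTriples X W₁ W₂ W₃ ≤ W₁.card * W₂.card * W₃.card := by
    unfold cntTriples
    refine (Finset.card_filter_le _ _).trans ?_
    rw [Finset.card_product, Finset.card_product, mul_assoc]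
  exact_mod_cast this

set_option maxHeartbeats 1000000 in
/-- Density increment. -/
lemma increment {G : Type*} [Group G] [DecidableEq G] (δ d : ℝ) (hδ0 : 0 < δ) (hδ4 : δ ≤ 1 / 4)
    (hd : 0 < d) (X W₁ W₂ W₃ U₁ U₂ U₃ : Finset G)
    (s₁ : U₁ ⊆ W₁) (s₂ : U₂ ⊆ W₂) (s₃ : U₃ ⊆ W₃)
    (pos : 0 < (W₁.card : ℝ) * W₂.card * W₃.card)
    (c₁ : δ * W₁.card ≤ U₁.card ∧ (U₁.card : ℝ) ≤ W₁.card / 2)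
    (c₂ : δ * W₂.card ≤ U₂.card ∧ (U₂.card : ℝ) ≤ W₂.card / 2)
    (c₃ : δ * W₃.card ≤ U₃.card ∧ (U₃.card : ℝ) ≤ W₃.card / 2)
    (hW : d * (W₁.card * W₂.card * W₃.card) ≤ cntTriples X W₁ W₂ W₃)
    (hU : (cntTriples X U₁ U₂ U₃ : ℝ) < d / 2 * (U₁.card * U₂.card * U₃.card)) :
    ∃ Z₁ ⊆ W₁, ∃ Z₂ ⊆ W₂, ∃ Z₃ ⊆ W₃, δ * W₁.card ≤ Z₁.card ∧ δ * W₂.card ≤ Z₂.card ∧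
      δ * W₃.card ≤ Z₃.card ∧
      (1 + δ ^ 3 / 2) * d * (Z₁.card * Z₂.card * Z₃.card) ≤ cntTriples X Z₁ Z₂ Z₃ := by
  have hsplit : (cntTriples X W₁ W₂ W₃ : ℝ) ≤ cntTriples X U₁ U₂ U₃
      + cntTriples X (W₁ \ U₁) W₂ W₃
      + cntTriples X U₁ (W₂ \ U₂) W₃ + cntTriples X U₁ U₂ (W₃ \ U₃) := by
    exact_mod_cast cnt_split X W₁ W₂ W₃ U₁ U₂ U₃
  have e₁ : ((W₁ \ U₁).card : ℝ) = W₁.card - U₁.card := Finset.cast_card_sdiff s₁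
  have e₂ : ((W₂ \ U₂).card : ℝ) = W₂.card - U₂.card := Finset.cast_card_sdiff s₂
  have e₃ : ((W₃ \ U₃).card : ℝ) = W₃.card - U₃.card := Finset.cast_card_sdiff s₃
  have n₁ : (0 : ℝ) ≤ W₁.card := by positivity
  have n₂ : (0 : ℝ) ≤ W₂.card := by positivity
  have n₃ : (0 : ℝ) ≤ W₃.card := by positivity
  by_contra hcon
  push Not at hcon
  have k1 := hcon (W₁ \ U₁) Finset.sdiff_subset W₂ subset_rfl W₃ subset_rfl
    (by rw [e₁]; linarith [mul_le_mul_of_nonneg_right hδ4 n₁, c₁.2]) (by linarith [mul_le_mul_of_nonneg_right hδ4 n₂]) (by linarith [mul_le_mul_of_nonneg_right hδ4 n₃])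
  have k2 := hcon U₁ s₁ (W₂ \ U₂) Finset.sdiff_subset W₃ subset_rfl
    c₁.1 (by rw [e₂]; linarith [mul_le_mul_of_nonneg_right hδ4 n₂, c₂.2]) (by linarith [mul_le_mul_of_nonneg_right hδ4 n₃])
  have k3 := hcon U₁ s₁ U₂ s₂ (W₃ \ U₃) Finset.sdiff_subset
    c₁.1 c₂.1 (by rw [e₃]; linarith [mul_le_mul_of_nonneg_right hδ4 n₃, c₃.2])
  rw [e₁] at k1
  rw [e₂] at k2
  rw [e₃] at k3
  have hV : δ ^ 3 * ((W₁.card : ℝ) * W₂.card * W₃.card) ≤ U₁.card * U₂.card * U₃.card := by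
    calc δ ^ 3 * ((W₁.card : ℝ) * W₂.card * W₃.card)
        = (δ * W₁.card) * (δ * W₂.card) * (δ * W₃.card) := by ring
      _ ≤ _ := by
        apply mul_le_mul (mul_le_mul c₁.1 c₂.1 (by positivity) (by positivity)) c₃.1
          (by positivity) (by positivity)
  generalize (W₁.card : ℝ) = w₁ at *
  generalize (W₂.card : ℝ) = w₂ at *
  generalize (W₃.card : ℝ) = w₃ at *
  have hu : (0 : ℝ) ≤ U₁.card * U₂.card * U₃.card := by positivity
  generalize (U₁.card : ℝ) = u₁ at *
  generalize (U₂.card : ℝ) = u₂ at *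
  generalize (U₃.card : ℝ) = u₃ at *
  have hδ3 : 0 < δ ^ 3 := by positivity
  have tot : d * (w₁ * w₂ * w₃) < d / 2 * (u₁ * u₂ * u₃)
      + (1 + δ ^ 3 / 2) * d * (w₁ * w₂ * w₃ - u₁ * u₂ * u₃) := by
    have : (1 + δ ^ 3 / 2) * d * (w₁ * w₂ * w₃ - u₁ * u₂ * u₃)
      = (1 + δ ^ 3 / 2) * d * ((w₁ - u₁) * w₂ * w₃) + (1 + δ ^ 3 / 2) * d * (u₁ * (w₂ - u₂) * w₃)
        + (1 + δ ^ 3 / 2) * d * (u₁ * u₂ * (w₃ - u₃)) := by ring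
    rw [this]
    linarith
  have tot2 : d * (u₁ * u₂ * u₃ * (1 + δ ^ 3)) < d * (δ ^ 3 * (w₁ * w₂ * w₃)) := by
    linarith
  have tot3 := lt_of_mul_lt_mul_left tot2 hd.le
  have tot4 := mul_nonneg hu hδ3.le
  linarith

lemma initial {G : Type*} [Group G] [DecidableEq G] (k : ℝ) (hk : 1 ≤ k) (X T : Finset G)
    (hne : X.Nonempty)
    (hT : (T.card : ℝ) ≤ k) (hXT : X * X ⊆ T * X) :
    ∃ t : G, (k ^ 2)⁻¹ * (X.card * (t • X).card * X.card) ≤ cntTriples X X (t • X) X := by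
  by_contra hcon
  push Not at hcon
  have hn : (0 : ℝ) < X.card := by exact_mod_cast Finset.card_pos.mpr hne
  have hcov : (X ×ˢ X ×ˢ X) ⊆ (T * T).biUnion (fun t =>
      (X ×ˢ X ×ˢ X).filter (fun p => t⁻¹ * (p.2.1 * p.2.2 * p.1) ∈ X)) := by
    rintro ⟨a, b, c⟩ h
    simp only [Finset.mem_product] at h
    simp only [Finset.mem_biUnion, Finset.mem_filter, Finset.mem_product]
    obtain ⟨t, ht, x, hx, e⟩ := Finset.mem_mul.mp (hXT (Finset.mul_mem_mul h.2.1 h.2.2))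
    obtain ⟨t', ht', y, hy, e'⟩ := Finset.mem_mul.mp (hXT (Finset.mul_mem_mul hx h.1))
    refine ⟨t * t', Finset.mul_mem_mul ht ht', h, ?_⟩
    have : (t * t')⁻¹ * (b * c * a) = y := by
      rw [← e, mul_assoc t x a, ← e']; group
    rw [this]; exact hy
  have hb : ∀ t : G, ((X ×ˢ X ×ˢ X).filter
      (fun p => t⁻¹ * (p.2.1 * p.2.2 * p.1) ∈ X)).card ≤ cntTriples X X (t⁻¹ • X) X := by
    intro t
    unfold cntTriples
    refine Finset.card_le_card_of_injOn (fun p => (p.1, t⁻¹ * p.2.1, p.2.2)) ?_ ?_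
    · rintro ⟨a, b, c⟩ h
      simp only [Finset.coe_filter, Finset.mem_product, Set.mem_ofPred_eq] at h ⊢
      refine ⟨⟨h.1.1, Finset.smul_mem_smul_finset h.1.2.1, h.1.2.2⟩, ?_⟩
      simpa [mul_assoc] using h.2
    · rintro ⟨a, b, c⟩ _ ⟨a', b', c'⟩ _ h
      simpa using h
  have h1 : ((X ×ˢ X ×ˢ X).card : ℝ) ≤ ∑ t ∈ T * T, (cntTriples X X (t⁻¹ • X) X : ℝ) := by
    exact_mod_cast (Finset.card_le_card hcov).trans
      (Finset.card_biUnion_le.trans (Finset.sum_le_sum (fun t _ => hb t)))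
  have hTT : ((T * T).card : ℝ) ≤ k ^ 2 := by
    calc ((T * T).card : ℝ) ≤ T.card * T.card := by exact_mod_cast Finset.card_mul_le
      _ ≤ k ^ 2 := by rw [sq]; exact mul_le_mul hT hT (by positivity) (by linarith)
  have hTne : (T * T).Nonempty := by
    obtain ⟨x, hx⟩ := hne
    obtain ⟨t, ht, _⟩ := Finset.mem_mul.mp (hXT (Finset.mul_mem_mul hx hx))
    exact ⟨_, Finset.mul_mem_mul ht ht⟩
  have h2 : ∑ t ∈ T * T, (cntTriples X X (t⁻¹ • X) X : ℝ) <
      ∑ t ∈ T * T, (k ^ 2)⁻¹ * ((X.card : ℝ) * X.card * X.card) := by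
    refine Finset.sum_lt_sum_of_nonempty hTne (fun t _ => ?_)
    have := hcon t⁻¹
    rwa [Finset.card_smul_finset] at this
  rw [Finset.sum_const, nsmul_eq_mul] at h2
  rw [Finset.card_product, Finset.card_product] at h1
  push_cast at h1
  have h3 : ((T * T).card : ℝ) * ((k ^ 2)⁻¹ * ((X.card : ℝ) * X.card * X.card)) ≤
      k ^ 2 * ((k ^ 2)⁻¹ * ((X.card : ℝ) * X.card * X.card)) :=
    mul_le_mul_of_nonneg_right hTT (by positivity)
  rw [← mul_assoc (k ^ 2), mul_inv_cancel₀ (by positivity), one_mul] at h3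
  linarith

lemma seh_mono {G : Type*} [Group G] {δ δ' : ℝ} (h : δ' ≤ δ) (hS : TripleSEH G δ) :
    TripleSEH G δ' := by
  intro W₁ W₂ W₃ Y₁ Y₂ Y₃
  obtain ⟨U₁, hU₁, U₂, hU₂, U₃, hU₃, V₁, hV₁, V₂, hV₂, V₃, hV₃, c1, c2, c3, d1, d2, d3, hh⟩ :=
    hS W₁ W₂ W₃ Y₁ Y₂ Y₃
  have key : ∀ W : Finset G, δ' * (W.card : ℝ) ≤ δ * W.card := fun W =>
    mul_le_mul_of_nonneg_right h (by positivity)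
  exact ⟨U₁, hU₁, U₂, hU₂, U₃, hU₃, V₁, hV₁, V₂, hV₂, V₃, hV₃, (key _).trans c1, (key _).trans c2,
    (key _).trans c3, (key _).trans d1, (key _).trans d2, (key _).trans d3, hh⟩

set_option maxHeartbeats 1000000 in
/-- The core bound, with an explicit number of steps `M`. -/
lemma core {G : Type*} [Group G] [DecidableEq G] (δ : ℝ) (hδ0 : 0 < δ) (hδ4 : δ ≤ 1 / 4)
    (hSEH : TripleSEH G δ) (k : ℝ) (hk : 1 ≤ k) (M : ℕ) (hM : k ^ 2 < (1 + δ ^ 3 / 2) ^ M)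
    (X T : Finset G) (hX1 : X ≠ {1}) (h1X : (1 : G) ∈ X)
    (hT : (T.card : ℝ) ≤ k) (hXT : X * X ⊆ T * X) :
    ∃ A ⊆ X, ProductFree A ∧ (k ^ 4)⁻¹ / 2 * (δ ^ (M + 1)) ^ 3 * X.card ≤ A.card := by
  have hne : X.Nonempty := ⟨1, h1X⟩
  have hn : (0 : ℝ) < X.card := by exact_mod_cast Finset.card_pos.mpr hne
  have hk4 : (k ^ 4)⁻¹ ≤ 1 := inv_le_one_of_one_le₀ (one_le_pow₀ hk)
  have hδM : δ ^ (M + 1) ≤ 1 := pow_le_one₀ hδ0.le (by linarith)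
  have hδMp : 0 < δ ^ (M + 1) := by positivity
  by_cases hsmall : δ ^ (M + 1) * X.card ≤ 1
  · -- a singleton
    obtain ⟨x, hx, hx1⟩ : ∃ x ∈ X, x ≠ 1 := by
      by_contra h
      push Not at h
      exact hX1 (Finset.eq_singleton_iff_unique_mem.mpr ⟨h1X, h⟩)
    refine ⟨{x}, by simpa using hx, ?_, ?_⟩
    · intro a ha b hb hab
      simp only [Finset.mem_singleton] at ha hb hab
      subst ha
      subst hb
      exact hx1 (by simpa using hab)
    · rw [Finset.card_singleton]
      have h3 : (δ ^ (M + 1)) ^ 3 ≤ δ ^ (M + 1) := by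
        apply pow_le_of_le_one hδMp.le hδM (by norm_num)
      have h4 : (k ^ 4)⁻¹ / 2 * (δ ^ (M + 1)) ^ 3 ≤ 1 * δ ^ (M + 1) :=
        mul_le_mul (by linarith) h3 (by positivity) (by norm_num)
      have h5 := mul_le_mul_of_nonneg_right h4 hn.le
      push_cast
      linarith
  · push Not at hsmall
    by_contra hcon
    push Not at hcon
    obtain ⟨t, ht⟩ := initial k hk X T hne hT hXT
    have hXX : ((X * X).card : ℝ) ≤ k * X.card := by
      calc ((X * X).card : ℝ) ≤ (T * X).card := by exact_mod_cast Finset.card_le_card hXT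
        _ ≤ T.card * X.card := by exact_mod_cast Finset.card_mul_le
        _ ≤ _ := mul_le_mul_of_nonneg_right hT hn.le
    have claim : ∀ m : ℕ, m ≤ M → ∃ W₁ ⊆ X, ∃ W₂ ⊆ t • X, ∃ W₃ ⊆ X,
        δ ^ m * X.card ≤ W₁.card ∧ δ ^ m * X.card ≤ W₂.card ∧ δ ^ m * X.card ≤ W₃.card ∧
        (1 + δ ^ 3 / 2) ^ m * (k ^ 2)⁻¹ * (W₁.card * W₂.card * W₃.card)
          ≤ cntTriples X W₁ W₂ W₃ := by
      intro m
      induction m with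
      | zero =>
        intro _
        refine ⟨X, subset_rfl, t • X, subset_rfl, X, subset_rfl, ?_, ?_, ?_, ?_⟩
        · simp
        · simp
        · simp
        · simpa using ht
      | succ m ih =>
        intro hm
        obtain ⟨W₁, s1, W₂, s2, W₃, s3, q1, q2, q3, hc⟩ := ih (by omega)
        have hpow : δ ^ (M + 1) ≤ δ * δ ^ m := by
          rw [← pow_succ']
          exact pow_le_pow_of_le_one hδ0.le (by linarith) (by omega)
        have big : 1 < δ * (δ ^ m * X.card) := by
          have := mul_le_mul_of_nonneg_right hpow hn.le
          linarith
        have b1 : 1 < δ * W₁.card := big.trans_le (mul_le_mul_of_nonneg_left q1 hδ0.le)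
        have b2 : 1 < δ * W₂.card := big.trans_le (mul_le_mul_of_nonneg_left q2 hδ0.le)
        have b3 : 1 < δ * W₃.card := big.trans_le (mul_le_mul_of_nonneg_left q3 hδ0.le)
        obtain ⟨U₁, u1, U₂, u2, U₃, u3, hemp, c1, c2, c3⟩ :=
          seh_step δ hδ0 hδ4 hSEH W₁ W₂ W₃ b1 b2 b3
        have hd : 0 < (1 + δ ^ 3 / 2) ^ m * (k ^ 2)⁻¹ := by positivity
        have hm' : ∀ a : ℝ, δ ^ m * X.card ≤ a → δ ^ (m + 1) * X.card ≤ δ * a := by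
          intro a ha
          have := mul_le_mul_of_nonneg_left ha hδ0.le
          calc _ = δ * (δ ^ m * X.card) := by ring
            _ ≤ _ := this
        have hfew : (cntTriples X U₁ U₂ U₃ : ℝ) <
            (1 + δ ^ 3 / 2) ^ m * (k ^ 2)⁻¹ / 2 * (U₁.card * U₂.card * U₃.card) := by
          by_contra hmany
          push Not at hmany
          have h23 : ((U₂ * U₃).card : ℝ) ≤ k * X.card := by
            refine le_trans ?_ hXX
            have : (U₂ * U₃).card ≤ (t • (X * X)).card := by
              apply Finset.card_le_card
              rw [← smul_mul_assoc]
              exact Finset.mul_subset_mul (u2.trans s2) (u3.trans s3)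
            rw [Finset.card_smul_finset] at this
            exact_mod_cast this
          have h31 : ((U₃ * U₁).card : ℝ) ≤ k * X.card := by
            refine le_trans ?_ hXX
            exact_mod_cast Finset.card_le_card
              (Finset.mul_subset_mul (u3.trans s3) (u1.trans s1))
          obtain ⟨A, hA, hpf, hcA⟩ := exists_productFree_of_empty X U₁ U₂ U₃ (k * X.card)
            (by positivity) hemp h23 h31
          have hlt := hcon A hA hpf
          have hp : ∀ w u : ℝ, δ ^ m * X.card ≤ w → δ * w ≤ u → δ ^ (M + 1) * X.card ≤ u := by
            intro w u hw hu
            refine le_trans ?_ ((hm' w hw).trans hu)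
            exact mul_le_mul_of_nonneg_right
              (pow_le_pow_of_le_one hδ0.le (by linarith) (by omega)) hn.le
          have g1 := hp _ _ q1 c1.1
          have g2 := hp _ _ q2 c2.1
          have g3 := hp _ _ q3 c3.1
          have hprod : (δ ^ (M + 1) * X.card) ^ 3 ≤ (U₁.card : ℝ) * U₂.card * U₃.card := by
            calc (δ ^ (M + 1) * (X.card : ℝ)) ^ 3 = (δ ^ (M + 1) * X.card) * (δ ^ (M + 1) * X.card)
                  * (δ ^ (M + 1) * X.card) := by ring
              _ ≤ _ := mul_le_mul (mul_le_mul g1 g2 (by positivity) (by positivity)) g3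
                  (by positivity) (by positivity)
          have hone : (1 : ℝ) ≤ (1 + δ ^ 3 / 2) ^ m :=
            one_le_pow₀ (by have : 0 < δ ^ 3 := by positivity
                            linarith)
          have hk2 : 0 < (k ^ 2)⁻¹ := by positivity
          have f1 : (k ^ 2)⁻¹ / 2 * (δ ^ (M + 1) * X.card) ^ 3 ≤
              (1 + δ ^ 3 / 2) ^ m * (k ^ 2)⁻¹ / 2 * (U₁.card * U₂.card * U₃.card) := by
            apply mul_le_mul _ hprod (by positivity) (by positivity)
            have := mul_le_mul_of_nonneg_right hone hk2.le
            linarith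
          have f2 : (k ^ 2)⁻¹ / 2 * (δ ^ (M + 1) * X.card) ^ 3 ≤ (k * X.card) ^ 2 * A.card :=
            f1.trans (hmany.trans hcA)
          have f3 : (k * X.card) ^ 2 * (A.card : ℝ) <
              (k * X.card) ^ 2 * ((k ^ 4)⁻¹ / 2 * (δ ^ (M + 1)) ^ 3 * X.card) :=
            mul_lt_mul_of_pos_left hlt (by positivity)
          have f4 : (k * X.card) ^ 2 * ((k ^ 4)⁻¹ / 2 * (δ ^ (M + 1)) ^ 3 * (X.card : ℝ))
              = (k ^ 2)⁻¹ / 2 * (δ ^ (M + 1) * X.card) ^ 3 := by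
            have : k ≠ 0 := by positivity
            field_simp
          linarith
        have w1 : (0 : ℝ) < W₁.card := pos_of_mul_pos_right (by linarith) hδ0.le
        have w2 : (0 : ℝ) < W₂.card := pos_of_mul_pos_right (by linarith) hδ0.le
        have w3 : (0 : ℝ) < W₃.card := pos_of_mul_pos_right (by linarith) hδ0.le
        obtain ⟨Z₁, z1, Z₂, z2, Z₃, z3, y1, y2, y3, hz⟩ := increment δ _ hδ0 hδ4 hd X W₁ W₂ W₃
          U₁ U₂ U₃ u1 u2 u3 (by positivity) c1 c2 c3 hc hfew
        refine ⟨Z₁, z1.trans s1, Z₂, z2.trans s2, Z₃, z3.trans s3, (hm' _ q1).trans y1,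
          (hm' _ q2).trans y2, (hm' _ q3).trans y3, ?_⟩
        rw [pow_succ']
        simpa only [mul_assoc] using hz
    obtain ⟨W₁, s1, W₂, s2, W₃, s3, q1, q2, q3, hc⟩ := claim M le_rfl
    have w0 : 0 < δ ^ M * (X.card : ℝ) := by positivity
    have w1 := w0.trans_le q1
    have w2 := w0.trans_le q2
    have w3 := w0.trans_le q3
    have hcl := hc.trans (cnt_le X W₁ W₂ W₃)
    have hgt : 1 < (1 + δ ^ 3 / 2) ^ M * (k ^ 2)⁻¹ := by
      rw [← div_eq_mul_inv, one_lt_div (by positivity)]; exact hM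
    have hp : (0 : ℝ) < W₁.card * W₂.card * W₃.card := by positivity
    have hgt' := mul_lt_mul_of_pos_right hgt hp
    linarith

theorem stmt1 {G : Type*} [Group G] [DecidableEq G] (δ : ℝ) (hδ : δ ∈ Set.Ioo (0 : ℝ) 1)
    (hSEH : TripleSEH G δ) :
    ∃ c ε : ℝ, 0 < c ∧ ε ∈ Set.Ioo (0 : ℝ) 1 ∧
      ∀ k : ℝ, 1 ≤ k →
        ∀ X : Finset G, X ≠ {1} →
          (1 : G) ∈ X → X⁻¹ = X →
          (∃ T : Finset G, (T.card : ℝ) ≤ k ∧ X * X ⊆ T * X) →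
          ∃ A ⊆ X, ProductFree A ∧ ε * X.card / k ^ c ≤ A.card := by
  obtain ⟨η, hη0, hη4, hηS⟩ : ∃ η : ℝ, 0 < η ∧ η ≤ 1 / 4 ∧ TripleSEH G η :=
    ⟨min δ (1 / 4), lt_min hδ.1 (by norm_num), min_le_right _ _, seh_mono (min_le_left _ _) hSEH⟩
  have hη3 : 0 < η ^ 3 := by positivity
  set L := Real.log (1 + η ^ 3 / 2) with hL
  have hLpos : 0 < L := Real.log_pos (by linarith)
  have hlogη : Real.log η < 0 := Real.log_neg hη0 (by linarith)
  set c' : ℝ := 2 * (-Real.log η) / L with hc'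
  have hc'pos : 0 < c' := by
    apply div_pos _ hLpos
    linarith
  refine ⟨4 + 3 * c', η ^ 6 * η ^ 3 / 2, by positivity, ⟨by positivity, ?_⟩, ?_⟩
  · have h1 : η ^ 6 ≤ 1 := pow_le_one₀ hη0.le (by linarith)
    have h2 : η ^ 3 ≤ 1 := pow_le_one₀ hη0.le (by linarith)
    nlinarith
  · rintro k hk X hX1 h1X - ⟨T, hT, hXT⟩
    have hk0 : 0 < k := by linarith
    have hlogk : 0 ≤ Real.log k := Real.log_nonneg hk
    set M : ℕ := ⌊2 * Real.log k / L⌋₊ + 1 with hMdef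
    have hMgt : 2 * Real.log k / L < M := by
      rw [hMdef]; push_cast; exact Nat.lt_floor_add_one _
    have hMle : (M : ℝ) ≤ 2 * Real.log k / L + 1 := by
      rw [hMdef]; push_cast
      have := Nat.floor_le (a := 2 * Real.log k / L) (by positivity)
      linarith
    have hM : k ^ 2 < (1 + η ^ 3 / 2) ^ M := by
      rw [← Real.log_lt_log_iff (by positivity) (by positivity), Real.log_pow, Real.log_pow]
      rw [div_lt_iff₀ hLpos] at hMgt
      exact_mod_cast hMgt
    obtain ⟨A, hA, hpf, hcard⟩ := core η hη0 hη4 hηS k hk M hM X T hX1 h1X hT hXT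
    refine ⟨A, hA, hpf, le_trans ?_ hcard⟩
    have hpow : η ^ 2 * k ^ (-c') ≤ η ^ (M + 1) := by
      rw [← Real.log_le_log_iff (by positivity) (by positivity),
        Real.log_mul (by positivity) (by positivity), Real.log_rpow hk0, Real.log_pow, Real.log_pow]
      have : -c' * Real.log k = (2 * Real.log k / L) * Real.log η := by
        rw [hc']; ring
      rw [this]
      push_cast
      nlinarith
    have hsplit : k ^ (4 + 3 * c') = k ^ 4 * (k ^ c') ^ 3 := by
      rw [Real.rpow_add hk0, mul_comm 3 c', Real.rpow_mul hk0.le]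
      norm_cast
    have hpow3 : (η ^ 2 * k ^ (-c')) ^ 3 ≤ (η ^ (M + 1)) ^ 3 :=
      pow_le_pow_left₀ (by positivity) hpow 3
    have hkc : 0 < k ^ c' := by positivity
    rw [hsplit]
    calc η ^ 6 * η ^ 3 / 2 * X.card / (k ^ 4 * (k ^ c') ^ 3)
        ≤ η ^ 6 * 1 / 2 * X.card / (k ^ 4 * (k ^ c') ^ 3) := by
          gcongr
          exact pow_le_one₀ hη0.le (by linarith)
      _ = (k ^ 4)⁻¹ / 2 * (η ^ 2 * k ^ (-c')) ^ 3 * X.card := by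
          rw [Real.rpow_neg hk0.le]
          field_simp
      _ ≤ _ := by gcongr
end
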